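/- arXiv:1010.0219 — 3 statements merged into one kernel-verified Lean document; each statement's English description precedes it below -/
import Mathlib

section
/- For every permutation π of {1,…,n}, the prefix exchange distance of π equals n + c(Γ(π)) − 2·c₁(Γ(π)) − δ, where δ = 0 if π(1) = 1 and δ = 2 otherwise. -/
/-!
Write `F π = n + c(π) - 2 c₁(π) - δ(π)`. Then `F 1 = 0` and `F ≥ 0`, so the theorem follows once
every prefix exchange lowers `F` by at most one (`potential_le_mul_swap`) and every `π ≠ 1` admits
a prefix exchange lowering `F` by exactly one (`exists_potential_mul_swap`).

Since `2 c₁ + δ` is `2` plus twice the number `g` of fixed points other than `0`, replacing `π` by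
`π * swap 0 j` changes `F` by the change of `c` plus `2 [π j = j] - 2 [π 0 = j]`. Two facts about
`c` are needed. Identifying `c(π)` with the number of classes of the relation `SameCycle π`,
multiplication by a transposition lowers `c` by at most one (`cycleCount_le_mul_swap`), and
it lowers `c` by exactly one when it moves a fixed point of `π` (`cycleCount_mul_swap_of_fixed`).
If `π 0 = j ≠ 0`, then `j` is fixed by `π * swap 0 j`, so the exchange raises `c` by one
and lowers `F` by one. If `π 0 = 0`, exchanging `0` with any non-fixed `j` lowers `c`, and
hence `F`, by one.
-/

/-- The number of fixed points of `π`, i.e. `c₁(Γ(π))`, the number of `1`-cycles in the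
graph of `π`. -/
def fixedCount {n : ℕ} (π : Equiv.Perm (Fin n)) : ℕ :=
  (Finset.univ.filter fun x => π x = x).card

/-- `c(Γ(π))` : the number of cycles in the disjoint cycle decomposition of `π`,
fixed points counting as cycles of length one. -/
def cycleCount {n : ℕ} (π : Equiv.Perm (Fin n)) : ℕ :=
  Multiset.card π.cycleType + fixedCount π

/-- The prefix exchange distance : the minimum number of prefix exchanges `ε(1,j)`
(`2 ≤ j ≤ n`, i.e. `j ≠ 0` in this 0-indexed encoding, where position `1` of the paper
is the index `0`) whose successive application transforms `π` into the identity,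
an exchange acting on `π` by `π ↦ π ∘ ε(1,j)`. -/
noncomputable def ped {n : ℕ} [NeZero n] (π : Equiv.Perm (Fin n)) : ℕ :=
  sInf {k | ∃ l : List (Fin n), l.length = k ∧ (∀ j ∈ l, j ≠ 0) ∧
    l.foldl (fun τ j => τ * Equiv.swap 0 j) π = 1}

open Equiv Equiv.Perm

/-- Cycles of `π`, fixed points included, are the classes of the relation `SameCycle π`. -/
lemma cycleCount_eq_card {n : ℕ} (π : Perm (Fin n)) :
    cycleCount π = Nat.card (Quotient (SameCycle.setoid π)) := by
  classical
  let f : Fin n → {x : Fin n // π x = x} ⊕ π.cycleFactorsFinset := fun a =>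
    if h : π a = a then Sum.inl ⟨a, h⟩
    else Sum.inr ⟨π.cycleOf a, cycleOf_mem_cycleFactorsFinset_iff.2 (mem_support.2 h)⟩
  have hsurj : Function.Surjective f := by
    rintro (⟨a, ha⟩ | ⟨c, hc⟩)
    · exact ⟨a, by simp [f, ha]⟩
    · obtain ⟨a, ha⟩ := IsCycle.nonempty_support (mem_cycleFactorsFinset_iff.1 hc).1
      have hca := cycle_is_cycleOf ha hc
      have : π a ≠ a := mem_support.1 (mem_cycleFactorsFinset_support_le hc ha)
      exact ⟨a, by simp [f, this, hca]⟩
  have hker : SameCycle.setoid π = Setoid.ker f := by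
    ext a b
    change SameCycle π a b ↔ f a = f b
    by_cases ha : π a = a <;> by_cases hb : π b = b
    · simp only [f, ha, hb, dite_true, Sum.inl.injEq, Subtype.mk.injEq]
      exact ⟨fun h => h.eq_of_left ha, fun h => h.sameCycle π⟩
    · simp only [f, ha, hb, dite_true, dite_false, reduceCtorEq, iff_false]
      exact fun h => hb (h.apply_eq_self_iff.1 ha)
    · simp only [f, ha, hb, dite_true, dite_false, reduceCtorEq, iff_false]
      exact fun h => ha (h.apply_eq_self_iff.2 hb)
    · simp only [f, ha, hb, dite_false, Sum.inr.injEq, Subtype.mk.injEq]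
      exact sameCycle_iff_cycleOf_eq_of_mem_support (mem_support.2 ha) (mem_support.2 hb)
  rw [hker, Nat.card_congr (Setoid.quotientKerEquivOfSurjective f hsurj), Nat.card_sum,
    cycleCount, fixedCount, cycleType_def, Multiset.card_map, add_comm]
  congr 1
  · rw [Nat.card_eq_fintype_card, Fintype.card_subtype]
  · simp

/-- A transposition merges at most two cycles into one. -/
lemma cycleCount_le_mul_swap {n : ℕ} (π : Perm (Fin n)) (x y : Fin n) :
    cycleCount π ≤ cycleCount (π * swap x y) + 1 := by
  classical
  rw [cycleCount_eq_card, cycleCount_eq_card]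
  let q : Fin n → Quotient (SameCycle.setoid π) := Quotient.mk _
  have hq : ∀ a, q (π a) = q a := fun a =>
    Quotient.sound (sameCycle_apply_left.2 (SameCycle.refl π a))
  -- Redirecting the class of `x` to that of `y` gives a map constant on the new cycles; it
  -- hits every old class except possibly that of `x`.
  let φ : Fin n → Quotient (SameCycle.setoid π) := fun a => if q a = q x then q y else q a
  have hφ : ∀ a, φ ((π * swap x y) a) = φ a := by
    intro a
    have h1 : ∀ a, φ (π a) = φ a := fun a => by simp [φ, hq]
    rw [Perm.mul_apply, h1]
    rcases eq_or_ne a x with rfl | hx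
    · simp [φ]
    · rcases eq_or_ne a y with rfl | hy
      · simp [φ]
      · rw [swap_apply_of_ne_of_ne hx hy]
  have hinv : ∀ a b, SameCycle (π * swap x y) a b → φ a = φ b := by
    intro a b h
    obtain ⟨i, rfl⟩ := h.exists_nat_pow_eq
    induction i with
    | zero => rfl
    | succ i ih => rw [pow_succ', Perm.mul_apply, hφ]; exact ih ⟨i, by simp⟩
  let ψ : Option (Quotient (SameCycle.setoid (π * swap x y))) →
      Quotient (SameCycle.setoid π) := fun o => o.elim (q x) (Quotient.lift φ hinv)
  have hψ : Function.Surjective ψ := by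
    intro c
    induction c using Quotient.inductionOn with | _ a
    by_cases h : q a = q x
    · exact ⟨none, h.symm⟩
    · exact ⟨some (Quotient.mk _ a), if_neg h⟩
  have := Nat.card_le_card_of_surjective ψ hψ
  simpa [Finite.card_option] using this

/-- Exchanging a fixed point `x` with another element inserts `x` into the cycle of that element. -/
lemma cycleCount_mul_swap_of_fixed {n : ℕ} (π : Perm (Fin n)) {x y : Fin n} (hxy : x ≠ y)
    (hx : π x = x) : cycleCount π = cycleCount (π * swap x y) + 1 := by
  classical
  refine le_antisymm (cycleCount_le_mul_swap π x y) ?_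
  rw [cycleCount_eq_card, cycleCount_eq_card]
  set ρ := π * swap x y with hρ
  let q : Fin n → Quotient (SameCycle.setoid ρ) := Quotient.mk _
  have hq : ∀ a, q (ρ a) = q a := fun a =>
    Quotient.sound (sameCycle_apply_left.2 (SameCycle.refl ρ a))
  have hqxy : q x = q y := by
    rw [← hq y]; simp [hρ, hx]
  have hπ : ∀ a, q (π a) = q a := by
    intro a
    have h : π a = ρ (swap x y a) := by simp [hρ]
    rw [h, hq]
    rcases eq_or_ne a x with rfl | hax
    · rw [swap_apply_left, hqxy]
    · rcases eq_or_ne a y with rfl | hay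
      · rw [swap_apply_right, hqxy]
      · rw [swap_apply_of_ne_of_ne hax hay]
  have hinv : ∀ a b, SameCycle π a b → q a = q b := by
    intro a b h
    obtain ⟨i, rfl⟩ := h.exists_nat_pow_eq
    induction i with
    | zero => rfl
    | succ i ih => rw [pow_succ', Perm.mul_apply, hπ]; exact ih ⟨i, by simp⟩
  -- The old cycles map onto the new ones, and those of `x` and `y` have the same image.
  let ψ : Quotient (SameCycle.setoid π) → Quotient (SameCycle.setoid ρ) := Quotient.lift q hinv
  have hψ : Function.Surjective ψ := by
    intro c
    induction c using Quotient.inductionOn with | _ a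
    exact ⟨Quotient.mk _ a, rfl⟩
  have hni : ¬ Function.Injective ψ := by
    intro hi
    have h : (Quotient.mk (SameCycle.setoid π) x) = Quotient.mk _ y := hi hqxy
    have h' : SameCycle π x y := Quotient.exact h
    exact hxy (h'.eq_of_left hx)
  rw [Nat.card_eq_fintype_card, Nat.card_eq_fintype_card]
  exact Fintype.card_lt_of_surjective_not_injective ψ hψ hni

/-- If `π x = y ≠ x`, then `y` is split off its cycle as a fixed point of `π * swap x y`. -/
lemma cycleCount_mul_swap_of_apply {n : ℕ} (π : Perm (Fin n)) {x y : Fin n} (hxy : x ≠ y)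
    (h : π x = y) : cycleCount (π * swap x y) = cycleCount π + 1 := by
  have := cycleCount_mul_swap_of_fixed (π * swap x y) hxy.symm (by simp [h])
  rwa [swap_comm y x, mul_assoc, swap_mul_self, mul_one] at this

/-- The right-hand side of the distance formula. -/
def potential {n : ℕ} [NeZero n] (π : Perm (Fin n)) : ℤ :=
  (n : ℤ) + (cycleCount π : ℤ) - 2 * (fixedCount π : ℤ) - (if π 0 = 0 then 0 else 2)

lemma potential_one {n : ℕ} [NeZero n] : potential (1 : Perm (Fin n)) = 0 := by
  simp [potential, cycleCount, fixedCount]; ring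

lemma potential_nonneg {n : ℕ} [NeZero n] (π : Perm (Fin n)) : 0 ≤ potential π := by
  have h1 : fixedCount π ≤ n := by
    simpa [fixedCount] using Finset.card_le_univ (Finset.univ.filter fun x => π x = x)
  unfold potential cycleCount
  split_ifs with h
  · push_cast; omega
  · have h2 : fixedCount π < n := by
      have := Finset.card_lt_univ_of_notMem (s := Finset.univ.filter fun x => π x = x) (x := 0)
        (by simpa using h)
      simpa [fixedCount] using this
    have h3 : 0 < Multiset.card π.cycleType := card_cycleType_pos.2 (by rintro rfl; simp at h)
    push_cast; omega

/-- The term `2 c₁ + δ` in sum form: `0` always contributes `2`, any other fixed point does, too. -/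
lemma two_mul_fixedCount {n : ℕ} [NeZero n] (π : Perm (Fin n)) {j : Fin n} (hj : j ≠ 0) :
    2 * (fixedCount π : ℤ) + (if π 0 = 0 then 0 else 2) =
      2 + (if π j = j then 2 else 0) +
        2 * ∑ x ∈ (Finset.univ.erase 0).erase j, if π x = x then 1 else 0 := by
  have h : (fixedCount π : ℤ) = ∑ x, if π x = x then 1 else 0 := by
    simp [fixedCount]
  rw [h, ← Finset.add_sum_erase _ _ (Finset.mem_univ (0 : Fin n)),
    ← Finset.add_sum_erase _ _ (Finset.mem_erase.2 ⟨hj, Finset.mem_univ j⟩)]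
  split_ifs <;> ring

lemma potential_mul_swap {n : ℕ} [NeZero n] (π : Perm (Fin n)) {j : Fin n} (hj : j ≠ 0) :
    potential (π * swap 0 j) - potential π =
      (cycleCount (π * swap 0 j) : ℤ) - cycleCount π +
        (if π j = j then 2 else 0) - (if π 0 = j then 2 else 0) := by
  have h1 := two_mul_fixedCount π hj
  have h2 := two_mul_fixedCount (π * swap 0 j) hj
  have h3 : (∑ x ∈ (Finset.univ.erase 0).erase j, if (π * swap 0 j) x = x then (1 : ℤ) else 0) =
      ∑ x ∈ (Finset.univ.erase 0).erase j, if π x = x then 1 else 0 := by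
    refine Finset.sum_congr rfl fun x hx => ?_
    simp only [Finset.mem_erase] at hx
    rw [Perm.mul_apply, swap_apply_of_ne_of_ne hx.2.1 hx.1]
  have h4 : (π * swap 0 j) j = π 0 := by simp
  rw [h3, h4] at h2
  unfold potential
  linarith

lemma potential_le_mul_swap {n : ℕ} [NeZero n] (π : Perm (Fin n)) {j : Fin n} (hj : j ≠ 0) :
    potential π ≤ potential (π * swap 0 j) + 1 := by
  have h := potential_mul_swap π hj
  have hc := cycleCount_le_mul_swap π 0 j
  by_cases h0 : π 0 = j
  · have hs := cycleCount_mul_swap_of_apply π hj.symm h0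
    split_ifs at h <;> omega
  · rw [if_neg h0] at h
    split_ifs at h <;> omega

lemma exists_potential_mul_swap {n : ℕ} [NeZero n] {π : Perm (Fin n)} (hπ : π ≠ 1) :
    ∃ j : Fin n, j ≠ 0 ∧ potential (π * swap 0 j) = potential π - 1 := by
  by_cases h0 : π 0 = 0
  · obtain ⟨j, hj⟩ : ∃ j, π j ≠ j := by
      by_contra! h
      exact hπ (Equiv.ext h)
    have hj0 : j ≠ 0 := by rintro rfl; exact hj h0
    refine ⟨j, hj0, ?_⟩
    have h := potential_mul_swap π hj0
    have hc := cycleCount_mul_swap_of_fixed π hj0.symm h0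
    rw [if_neg hj, if_neg (by rw [h0]; exact hj0.symm)] at h
    omega
  · refine ⟨π 0, h0, ?_⟩
    have h := potential_mul_swap π h0
    have hc := cycleCount_mul_swap_of_apply π (Ne.symm h0) rfl
    rw [if_neg (fun h => h0 (π.injective h)), if_pos rfl] at h
    omega

lemma potential_le_length {n : ℕ} [NeZero n] (l : List (Fin n)) (hl : ∀ j ∈ l, j ≠ 0)
    (π : Perm (Fin n)) (h : l.foldl (fun τ j => τ * swap 0 j) π = 1) :
    potential π ≤ l.length := by
  induction l generalizing π with
  | nil => simp only [List.foldl_nil] at h; simp [h, potential_one]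
  | cons j l ih =>
    have h1 := ih (fun i hi => hl i (List.mem_cons_of_mem _ hi)) (π * swap 0 j) h
    have h2 := potential_le_mul_swap π (hl j List.mem_cons_self)
    push_cast [List.length_cons]
    linarith

lemma exists_list_of_potential_le {n : ℕ} [NeZero n] (k : ℕ) (π : Perm (Fin n))
    (hk : potential π ≤ k) : ∃ l : List (Fin n), l.length ≤ k ∧ (∀ j ∈ l, j ≠ 0) ∧
      l.foldl (fun τ j => τ * swap 0 j) π = 1 := by
  induction k generalizing π with
  | zero =>
    refine ⟨[], by simp, by simp, ?_⟩
    by_contra hπ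
    obtain ⟨j, -, hj⟩ := exists_potential_mul_swap (π := π) hπ
    have := potential_nonneg (π * swap 0 j)
    push_cast at hk
    linarith
  | succ k ih =>
    by_cases hπ : π = 1
    · exact ⟨[], by simp, by simp, hπ⟩
    · obtain ⟨j, hj0, hj⟩ := exists_potential_mul_swap hπ
      obtain ⟨l, hlen, hl, hfold⟩ := ih (π * swap 0 j) (by push_cast at hk; linarith)
      refine ⟨j :: l, by simpa using hlen, ?_, hfold⟩
      simpa [hj0] using hl

/-- For every permutation `π` of `{1,…,n}`,
`ped(π) = n + c(Γ(π)) - 2 c₁(Γ(π)) - δ`, where `δ = 0` if `π₁ = 1` and `δ = 2`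
otherwise. -/
theorem prefix_exchange_distance_formula {n : ℕ} [NeZero n] (π : Equiv.Perm (Fin n)) :
    (ped π : ℤ) = (n : ℤ) + (cycleCount π : ℤ) - 2 * (fixedCount π : ℤ) -
      (if π 0 = 0 then 0 else 2) := by
  change (ped π : ℤ) = potential π
  obtain ⟨k, hk⟩ := Int.eq_ofNat_of_zero_le (potential_nonneg π)
  obtain ⟨l, hlen, hl, hfold⟩ := exists_list_of_potential_le k π hk.le
  have hmem : l.length ∈ {k | ∃ l : List (Fin n), l.length = k ∧ (∀ j ∈ l, j ≠ 0) ∧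
      l.foldl (fun τ j => τ * Equiv.swap 0 j) π = 1} := ⟨l, rfl, hl, hfold⟩
  have hle : ped π ≤ l.length := Nat.sInf_le hmem
  obtain ⟨l', hlen', hl', hfold'⟩ := Nat.sInf_mem ⟨_, hmem⟩
  have hge := potential_le_length l' hl' π hfold'
  change l'.length = ped π at hlen'
  omega
end

section
/- For any 1 < i ≤ j ≤ n, applying to a signed permutation π the three prefix signed reversals of lengths j, then j−i+1, then j, yields exactly π ∘ ρ̄(i,j), the result of applying the signed reversal ρ̄(i,j) to π; consequently the effect of any signed reversal can be mimicked by at most three prefix signed reversals. -/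
/-!
The prefix signed reversal of length `j` is an involution that moves the block of positions
`i, …, j` onto the prefix `1, …, j - i + 1`. Conjugating the prefix signed reversal of length
`j - i + 1` by it therefore gives the signed reversal of that block: entries in the block change
sign three times and end up reversed, entries before it change sign twice and return to their
place, and entries after position `j` never move. The argument needs only position arithmetic,
checked separately on these three ranges.
-/

/-- A signed permutation of size `n`, in one-line notation: the (0-indexed) position `i`
holds the signed value `π i`; the absolute values form a permutation of `{1,…,n}`.
This encodes a bijection of `{-n,…,-1,1,…,n}` satisfying `π(-i) = -π(i)`. -/
def IsSignedPerm {n : ℕ} (π : Fin n → ℤ) : Prop :=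
  (∀ i, 1 ≤ (π i).natAbs ∧ (π i).natAbs ≤ n) ∧
    Function.Injective fun i => (π i).natAbs

/-- The signed reversal `ρ̄(i,j)` (with 1-indexed `i ≤ j`) applied to `π` : the
(1-indexed) position `k` with `i ≤ k ≤ j` receives `-π (i+j-k)`, other positions are
unchanged. -/
def signedReversal {n : ℕ} (i j : ℕ) (π : Fin n → ℤ) : Fin n → ℤ :=
  fun k =>
    if h : 1 ≤ i ∧ i ≤ (k : ℕ) + 1 ∧ (k : ℕ) + 1 ≤ j ∧ j ≤ n then
      -π ⟨i + j - (k : ℕ) - 2, by have := k.isLt; omega⟩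
    else π k

/-- The prefix signed reversal of length `j`, i.e. `ρ̄(1,j)`. -/
def prefixSignedReversal {n : ℕ} (j : ℕ) (π : Fin n → ℤ) : Fin n → ℤ :=
  signedReversal 1 j π

/-- For any `1 < i ≤ j ≤ n`, applying to a signed permutation `π` the three prefix
signed reversals of lengths `j`, then `j-i+1`, then `j`, yields exactly
`π ∘ ρ̄(i,j)`; consequently any signed reversal can be mimicked by at most three
prefix signed reversals. -/
theorem signed_reversal_eq_three_prefix_signed_reversals {n : ℕ} (i j : ℕ)
    (h1 : 1 < i) (hij : i ≤ j) (hjn : j ≤ n) (π : Fin n → ℤ) (hπ : IsSignedPerm π) :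
    prefixSignedReversal j (prefixSignedReversal (j - i + 1) (prefixSignedReversal j π)) =
      signedReversal i j π := by
  funext k
  have hk := k.isLt
  simp only [prefixSignedReversal, signedReversal]
  -- Positions are 0-indexed, so the prefix reversal of length `j` sends `k < j` to `j - 1 - k`;
  -- this lands in the prefix of length `j - i + 1` exactly when `i ≤ k + 1`.
  by_cases hkj : (k : ℕ) + 1 ≤ j
  · by_cases hik : i ≤ (k : ℕ) + 1
    · -- `k ↦ j - 1 - k ↦ k + 1 - i ↦ i + j - k - 2`, with three sign changes
      rw [dif_pos (by omega), dif_pos (by omega), dif_pos (by omega), dif_pos (by omega), neg_neg]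
      congr 2
      ext
      simp only
      omega
    · -- `k ↦ j - 1 - k ↦ k`, with two sign changes
      rw [dif_pos (by omega), dif_neg (by omega), dif_pos (by omega),
        dif_neg (by omega), neg_neg]
      congr 1
      ext
      simp only
      omega
  · rw [dif_neg (by omega), dif_neg (by omega), dif_neg (by omega), dif_neg (by omega)]
end

section
/- For any 1 < i ≤ j ≤ n, applying to a permutation π of {1,…,n} the three prefix reversals of lengths j, then j−i+1, then j, yields exactly π ∘ ρ(i,j), the result of applying the reversal ρ(i,j) to π; consequently the effect of any reversal can be mimicked by at most three prefix reversals. -/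
/-!
Read on positions, the prefix reversal of length `j` sends `k ≤ j` to `j + 1 - k` and fixes `k > j`.
It therefore swaps the block `{i,…,j}` with the prefix `{1,…,j - i + 1}`, and conjugating the
prefix reversal of length `j - i + 1` by it gives the reversal of the block `{i,…,j}`:
`k ↦ j + 1 - k ↦ k - i + 1 ↦ i + j - k` for `i ≤ k ≤ j`, while a position `k < i` goes to
`j + 1 - k > j - i + 1`, stays there, and returns to `k`.
-/

/-- A permutation of `{1,…,n}` in one-line notation: the (0-indexed) position `i`
holds the value `π i`; the values form a permutation of `{1,…,n}`. -/
def IsPermSeq {n : ℕ} (π : Fin n → ℕ) : Prop :=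
  (∀ i, 1 ≤ π i ∧ π i ≤ n) ∧ Function.Injective π

/-- The reversal `ρ(i,j)` (with 1-indexed `i ≤ j`) applied to `π` : the (1-indexed)
position `k` with `i ≤ k ≤ j` receives `π (i+j-k)`, other positions are unchanged. -/
def reversal {n : ℕ} (i j : ℕ) (π : Fin n → ℕ) : Fin n → ℕ :=
  fun k =>
    if h : 1 ≤ i ∧ i ≤ (k : ℕ) + 1 ∧ (k : ℕ) + 1 ≤ j ∧ j ≤ n then
      π ⟨i + j - (k : ℕ) - 2, by have := k.isLt; omega⟩
    else π k

/-- The prefix reversal of length `j`, i.e. `ρ(1,j)`. -/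
def prefixReversal {n : ℕ} (j : ℕ) (π : Fin n → ℕ) : Fin n → ℕ :=
  reversal 1 j π

/-- For any `1 < i ≤ j ≤ n`, applying to a permutation `π` of `{1,…,n}` the three
prefix reversals of lengths `j`, then `j-i+1`, then `j`, yields exactly `π ∘ ρ(i,j)`;
consequently any reversal can be mimicked by at most three prefix reversals. -/
theorem reversal_eq_three_prefix_reversals {n : ℕ} (i j : ℕ)
    (h1 : 1 < i) (hij : i ≤ j) (hjn : j ≤ n) (π : Fin n → ℕ) (hπ : IsPermSeq π) :
    prefixReversal j (prefixReversal (j - i + 1) (prefixReversal j π)) =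
      reversal i j π := by
  funext k
  have hk := k.isLt
  simp only [prefixReversal, reversal]
  -- Each consistent case is an equality of two positions; the other cases have contradictory bounds.
  split_ifs <;> first | omega | (congr 1; ext; simp only; omega)
end
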